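/- Let ρ and ε be real numbers with 0 < ρ < ε ≤ 1/√3. Set ℓ = ⌈ ln(1/(ε²π_*)) / (4 ln(ε/ρ)) ⌉, k = ⌈ (1/ε)^{2ℓ} ⌉, and R = kℓ + 1. Let K' = K − 𝟙πᵀ, where 𝟙πᵀ ∈ ℝ^{V×V} is the rank-one matrix whose (u,v) entry is π(v), and suppose the ℓ²→ℓ² operator norm of (K')^{2ℓ} is at most ρ^{2ℓ}. Then the symmetric matrix (5ε/2)·Π + (1/m)·A is a 2R-local sum of PSD matrices. In particular, for every x ∈ {−1,+1}^V one has Σ_{u,v} A_{uv}x_ux_v ≥ −(5ε/2)·m, so the fraction of edge weight cut by the partition determined by x, namely (1/2) − (1/(2m))Σ_{u,v} A_{uv}x_ux_v, is at most 1/2 + (5/4)ε. -/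

import Mathlib

/-!
Write `Π = diag π`, `J = 𝟙 πᵀ`, `K' = K - J` and `s = K' / ε`.  All matrices in play are
self-adjoint with respect to `π` (`Reversible`), and `K'^t = K^t - J` for `t ≥ 1`.

*Sampling.*  If `y` is a vector with `ℓ¹` norm `c`, let `z` be the random signed multiple of a
basis vector with mean `y` and second moment `c · diag |y|`.  The sum of `N + 1` independent copies
of `z` is supported on at most `N + 1` points, so its second moment is `(N + 1)`-local; after
rescaling, `y yᵀ + (c / N) diag |y|` is `(N + 1)`-local (`isLocalPSDSum_rankOne`).  Applying this
to the rows of a reversible `P` with absolute row sums at most `c` shows that `Π P² + (c² / N) Π`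
is `(N + 1)`-local (`isLocalPSDSum_square`).  Here `N + 1 = 2 (k l + 1)`.

*Algebra.*  For a suitable `γ ∈ [0, 1 / ε]`, the matrix `P₀ = 1 + K / ε - γ J` satisfies
`P₀² = 1 + 2 K / ε + s²`.  The term `s²` is traded for `s ^ (2 l)` by the sum-of-squares form of
`l x² ≤ l - 1 + x ^ (2 l)` (`sum_squares_identity`), whose squares are those of `s^j - s^(j+2)`.
Together, `ε` times the resulting sum of squares is
`ε (1 - 1 / (2 l)) + K + (ε / (2 l)) s ^ (2 l)`, and multiplication by `Π` turns `K` into `A / m`.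

*Remainder.*  The hypothesis on the operator norm bounds the absolute row sums of `K' ^ (2 l)` by
`ρ ^ (2 l) √|V|`, and the choice of `l` makes this at most `ε ^ (2 l + 1)`
(`walk_length_bound`).  Hence `Π s ^ (2 l)` is dominated by a small multiple of `Π` through
two-variable squares (`IsLocalPSDSum.diagonal_sub`).  The total of all multiples of `Π` used stays
below `5 ε / 2` (`total_cost_bound`).  The statement about `±1` vectors follows by evaluating the
quadratic form.
-/

section WeightedGraph

variable {V : Type*} [Fintype V] [DecidableEq V] [Nonempty V]

/-- The (weighted) degree `deg(u) = ∑_v A_{uv}` of a weighted graph `A`. -/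
noncomputable def gdeg (A : Matrix V V ℝ) (u : V) : ℝ := ∑ v, A u v

/-- The total weight `m = ∑_u deg(u)`. -/
noncomputable def gm (A : Matrix V V ℝ) : ℝ := ∑ u, gdeg A u

/-- The stationary distribution `π(u) = deg(u)/m` of the random walk on `A`. -/
noncomputable def gpi (A : Matrix V V ℝ) (u : V) : ℝ := gdeg A u / gm A

/-- `π_* = min_u π(u)`. -/
noncomputable def gpiStar (A : Matrix V V ℝ) : ℝ :=
  Finset.univ.inf' Finset.univ_nonempty (gpi A)

/-- The random-walk transition matrix `K = D⁻¹A`, i.e. `K_{uv} = A_{uv}/deg(u)`. -/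
noncomputable def gK (A : Matrix V V ℝ) : Matrix V V ℝ :=
  Matrix.of fun u v => A u v / gdeg A u

/-- The `ℓ² → ℓ²` operator norm (spectral norm) of a real square matrix. -/
noncomputable def l2opNorm (M : Matrix V V ℝ) : ℝ :=
  ‖Matrix.toEuclideanCLM (𝕜 := ℝ) M‖

/-- A symmetric matrix `M` is an `R`-local sum of PSD matrices if it is a finite sum
`M = ∑ i, M_i` of positive semidefinite matrices, each supported on a set `S_i` of at
most `R` rows/columns.  This is exactly derivability of `xᵀMx ≥ 0` in the `R`-local,
degree-2 static sum-of-squares proof system. -/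
def IsLocalPSDSum (R : ℕ) (M : Matrix V V ℝ) : Prop :=
  ∃ (n : ℕ) (Ms : Fin n → Matrix V V ℝ) (Ss : Fin n → Finset V),
    M = ∑ i, Ms i ∧ (∀ i, (Ms i).PosSemidef) ∧ (∀ i, (Ss i).card ≤ R) ∧
    (∀ i u v, Ms i u v ≠ 0 → u ∈ Ss i ∧ v ∈ Ss i)

end WeightedGraph


open Matrix Finset

/-! ### The cone of local sums of positive semidefinite matrices -/

section LocalCone

variable {V : Type*}

lemma IsLocalPSDSum.of_fintype {ι : Type*} [Fintype ι] {R : ℕ} (Ms : ι → Matrix V V ℝ)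
    (Ss : ι → Finset V) (h1 : ∀ i, (Ms i).PosSemidef) (h2 : ∀ i, (Ss i).card ≤ R)
    (h3 : ∀ i u v, Ms i u v ≠ 0 → u ∈ Ss i ∧ v ∈ Ss i) :
    IsLocalPSDSum R (∑ i, Ms i) := by
  let e := (Fintype.equivFin ι).symm
  exact ⟨Fintype.card ι, fun i => Ms (e i), fun i => Ss (e i), (e.sum_comp Ms).symm,
    fun i => h1 _, fun i => h2 _, fun i => h3 _⟩

lemma IsLocalPSDSum.zero (R : ℕ) : IsLocalPSDSum R (0 : Matrix V V ℝ) :=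
  ⟨0, Fin.elim0, Fin.elim0, by simp, fun i => i.elim0, fun i => i.elim0, fun i => i.elim0⟩

lemma IsLocalPSDSum.add {R : ℕ} {M N : Matrix V V ℝ} (hM : IsLocalPSDSum R M)
    (hN : IsLocalPSDSum R N) : IsLocalPSDSum R (M + N) := by
  obtain ⟨n, Ms, Ss, rfl, h1, h2, h3⟩ := hM
  obtain ⟨n', Ms', Ss', rfl, h1', h2', h3'⟩ := hN
  have h := IsLocalPSDSum.of_fintype (R := R) (Sum.elim Ms Ms') (Sum.elim Ss Ss')
    (by rintro (i | i); exacts [h1 i, h1' i]) (by rintro (i | i); exacts [h2 i, h2' i])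
    (by rintro (i | i); exacts [h3 i, h3' i])
  simpa [Fintype.sum_sum_type] using h

lemma IsLocalPSDSum.sum {ι : Type*} {R : ℕ} (s : Finset ι) {M : ι → Matrix V V ℝ}
    (h : ∀ i ∈ s, IsLocalPSDSum R (M i)) : IsLocalPSDSum R (∑ i ∈ s, M i) := by
  classical
  induction s using Finset.induction_on with
  | empty => simpa using IsLocalPSDSum.zero R
  | insert a s ha ih =>
    rw [Finset.sum_insert ha]
    exact (h a (by simp)).add (ih fun i hi => h i (by simp [hi]))

lemma IsLocalPSDSum.smul {R : ℕ} {M : Matrix V V ℝ} {c : ℝ} (hc : 0 ≤ c)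
    (hM : IsLocalPSDSum R M) : IsLocalPSDSum R (c • M) := by
  obtain ⟨n, Ms, Ss, rfl, h1, h2, h3⟩ := hM
  refine ⟨n, fun i => c • Ms i, Ss, by rw [Finset.smul_sum], fun i => (h1 i).smul hc, h2, ?_⟩
  intro i u v h
  exact h3 i u v fun h0 => h (by simp [h0])

lemma IsLocalPSDSum.mono {R R' : ℕ} (hR : R ≤ R') {M : Matrix V V ℝ}
    (hM : IsLocalPSDSum R M) : IsLocalPSDSum R' M := by
  obtain ⟨n, Ms, Ss, rfl, h1, h2, h3⟩ := hM
  exact ⟨n, Ms, Ss, rfl, h1, fun i => (h2 i).trans hR, h3⟩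

lemma IsLocalPSDSum.vecMulVec [Finite V] {R : ℕ} (a : V → ℝ) (S : Finset V) (hS : S.card ≤ R)
    (ha : ∀ v, v ∉ S → a v = 0) : IsLocalPSDSum R (vecMulVec a a) := by
  refine ⟨1, fun _ => Matrix.vecMulVec a a, fun _ => S, by simp, fun _ => ?_, fun _ => hS, ?_⟩
  · simpa using posSemidef_vecMulVec_self_star a
  · intro _ u v h
    simp only [vecMulVec_apply] at h
    exact ⟨by_contra fun hu => h (by simp [ha u hu]), by_contra fun hv => h (by simp [ha v hv])⟩

lemma IsLocalPSDSum.posSemidef {R : ℕ} {M : Matrix V V ℝ} (hM : IsLocalPSDSum R M) :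
    M.PosSemidef := by
  obtain ⟨n, Ms, Ss, rfl, h1, h2, h3⟩ := hM
  exact posSemidef_sum _ fun i _ => h1 i

variable [Fintype V] [DecidableEq V]

lemma IsLocalPSDSum.diagonal {R : ℕ} (hR : 1 ≤ R) {d : V → ℝ} (hd : ∀ v, 0 ≤ d v) :
    IsLocalPSDSum R (Matrix.diagonal d) := by
  have h : Matrix.diagonal d =
      ∑ v, d v • Matrix.vecMulVec (Pi.single v (1 : ℝ)) (Pi.single v (1 : ℝ)) := by
    ext i j
    rw [Matrix.sum_apply]
    simp only [Matrix.smul_apply, vecMulVec_apply, smul_eq_mul, Pi.single_apply,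
      Matrix.diagonal_apply]
    by_cases hij : i = j
    · subst hij; simp
    · simp [hij]
  rw [h]
  refine IsLocalPSDSum.sum _ fun v _ => IsLocalPSDSum.smul (hd v) ?_
  refine IsLocalPSDSum.vecMulVec _ {v} (by simpa using hR) fun w hw => ?_
  simp only [Finset.mem_singleton] at hw
  simp [hw]

/-- A symmetric matrix `S` is dominated by any diagonal bounding its absolute row sums, and the
domination is witnessed by the two-variable squares `|S u v| (x u - sign (S u v) x v) ^ 2 / 2`. -/
lemma IsLocalPSDSum.diagonal_sub {R : ℕ} (hR : 2 ≤ R) {d : V → ℝ} {S : Matrix V V ℝ}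
    (hS : ∀ u v, S u v = S v u) (hd : ∀ u, ∑ v, |S u v| ≤ d u) :
    IsLocalPSDSum R (Matrix.diagonal d - S) := by
  let b : V → V → V → ℝ := fun u v =>
    Pi.single u 1 - (SignType.sign (S u v) : ℝ) • Pi.single v (1 : ℝ)
  have h : Matrix.diagonal d - S = Matrix.diagonal (fun u => d u - ∑ v, |S u v|)
      + ∑ u, ∑ v, (|S u v| / 2) • Matrix.vecMulVec (b u v) (b u v) := by
    ext i j
    have key : ∀ u v, (|S u v| / 2) * (b u v i * b u v j)
        = (if i = j then (if u = i then |S u v| / 2 else 0) else 0)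
          + (if i = j then (if v = i then |S u v| / 2 else 0) else 0)
          - (if u = i then (if v = j then S u v / 2 else 0) else 0)
          - (if v = i then (if u = j then S u v / 2 else 0) else 0) := by
      intro u v
      have h1 : |S u v| * (SignType.sign (S u v) : ℝ) = S u v := abs_mul_sign _
      have h2 : S u v * (SignType.sign (S u v) : ℝ) = |S u v| := self_mul_sign _
      simp only [b, Pi.sub_apply, Pi.smul_apply, smul_eq_mul, Pi.single_apply]
      generalize (SignType.sign (S u v) : ℝ) = g at h1 h2
      have h3 : |S u v| * (g * g) = |S u v| := by rw [← mul_assoc, h1, h2]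
      by_cases hij : i = j
      · subst hij
        by_cases hu : i = u <;> by_cases hv : i = v <;>
          simp [hu, hv, eq_comm (a := u) (b := i), eq_comm (a := v) (b := i)] <;> grind
      · by_cases hu : i = u <;> by_cases hv : i = v <;> by_cases hu' : j = u <;>
          by_cases hv' : j = v <;> grind
    simp only [Matrix.sub_apply, Matrix.add_apply, Matrix.sum_apply, Matrix.smul_apply,
      vecMulVec_apply, smul_eq_mul, key, Finset.sum_add_distrib, Finset.sum_sub_distrib]
    have e1 : ∑ u, ∑ v, (if v = i then |S u v| / 2 else 0) = ∑ v, |S i v| / 2 := by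
      simp [hS _ i]
    have e2 : ∑ u, ∑ v, (if u = i then |S u v| / 2 else 0) = ∑ v, |S i v| / 2 := by
      rw [Finset.sum_comm]; simp
    have e3 : ∑ u, ∑ v, (if u = i then (if v = j then S u v / 2 else 0) else 0)
        = S i j / 2 := by
      rw [Finset.sum_comm]; simp
    have e4 : ∑ u, ∑ v, (if v = i then (if u = j then S u v / 2 else 0) else 0)
        = S i j / 2 := by
      simp [hS j i]
    rw [e3, e4]
    by_cases hij : i = j
    · subst hij
      simp only [if_true, e1, e2, Matrix.diagonal_apply_eq, ← Finset.sum_div]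
      ring
    · simp [hij]
      ring
  rw [h]
  refine (IsLocalPSDSum.diagonal (by omega) fun u => sub_nonneg.2 (hd u)).add ?_
  refine IsLocalPSDSum.sum _ fun u _ => IsLocalPSDSum.sum _ fun v _ =>
    IsLocalPSDSum.smul (by positivity) ?_
  refine IsLocalPSDSum.vecMulVec _ {u, v} (card_le_two.trans hR) fun w hw => ?_
  simp only [Finset.mem_insert, Finset.mem_singleton, not_or] at hw
  simp [b, hw.1, hw.2]

end LocalCone

/-! ### Sparse sampling of a rank-one form -/

section Sampling

variable {V : Type*} [Fintype V] [DecidableEq V]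

/-- Let `z` be the random vector equal to `t v • e_v` with probability `q v`, so that `y` is its
mean and `diagonal (q * t ^ 2)` its second moment.  The matrix below is the expectation of `w wᵀ`
for `w = a + z₁ + ⋯ + z_N` with independent copies `zᵢ` of `z`, and every outcome of `w` is
supported on `S` and at most `N` further points.  The induction averages over one copy at a
time. -/
lemma isLocalPSDSum_sampling (q t y : V → ℝ) (hq0 : ∀ v, 0 ≤ q v) (hq1 : ∑ v, q v = 1)
    (hy : ∀ v, y v = q v * t v) (N : ℕ) :
    ∀ (S : Finset V) (a : V → ℝ), (∀ v, v ∉ S → a v = 0) →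
      IsLocalPSDSum (S.card + N) (vecMulVec (a + (N : ℝ) • y) (a + (N : ℝ) • y)
        + (N : ℝ) • (Matrix.diagonal (fun v => q v * t v ^ 2) - vecMulVec y y)) := by
  induction N with
  | zero =>
    intro S a ha
    simpa using IsLocalPSDSum.vecMulVec a S le_rfl ha
  | succ N ih =>
    intro S a ha
    have h : vecMulVec (a + ((N + 1 : ℕ) : ℝ) • y) (a + ((N + 1 : ℕ) : ℝ) • y)
        + ((N + 1 : ℕ) : ℝ) • (Matrix.diagonal (fun v => q v * t v ^ 2) - vecMulVec y y)
        = ∑ v, q v • (vecMulVec ((a + Pi.single v (t v)) + (N : ℝ) • y)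
            ((a + Pi.single v (t v)) + (N : ℝ) • y)
          + (N : ℝ) • (Matrix.diagonal (fun v => q v * t v ^ 2) - vecMulVec y y)) := by
      ext i j
      rw [Matrix.sum_apply]
      simp only [Matrix.add_apply, Matrix.smul_apply, Matrix.sub_apply, vecMulVec_apply,
        Pi.add_apply, Pi.smul_apply, smul_eq_mul, Matrix.diagonal_apply]
      generalize hE : (N : ℝ) * ((if i = j then q i * t i ^ 2 else 0) - y i * y j) = E
      have key : ∀ v, q v * ((a i + (Pi.single v (t v) : V → ℝ) i + N * y i)
            * (a j + (Pi.single v (t v) : V → ℝ) j + N * y j) + E)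
          = q v * ((a i + N * y i) * (a j + N * y j) + E)
            + (if i = v then y v * (a j + N * y j) else 0)
            + (if j = v then y v * (a i + N * y i) else 0)
            + (if i = v then (if i = j then q v * t v ^ 2 else 0) else 0) := by
        intro v
        rw [hy v]
        simp only [Pi.single_apply]
        by_cases h1 : i = v
        · subst h1
          by_cases h2 : i = j
          · subst h2; simp; ring
          · simp [h2, Ne.symm h2]; ring
        · by_cases h2 : j = v
          · subst h2; simp [h1]; ring
          · simp [h1, h2]
      rw [Finset.sum_congr rfl fun v _ => key v]
      simp only [Finset.sum_add_distrib, ← Finset.sum_mul, hq1, Finset.sum_ite_eq,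
        Finset.mem_univ, if_true]
      rw [← hE]
      push_cast
      ring
    rw [h]
    refine IsLocalPSDSum.sum _ fun v _ => IsLocalPSDSum.smul (hq0 v) ?_
    refine (ih (insert v S) (a + Pi.single v (t v)) fun w hw => ?_).mono ?_
    · simp only [Finset.mem_insert, not_or] at hw
      simp [ha w hw.2, hw.1]
    · have := Finset.card_insert_le v S
      omega

lemma isLocalPSDSum_rankOne (y : V → ℝ) {N : ℕ} (hN : 1 ≤ N) :
    IsLocalPSDSum (N + 1) (vecMulVec y y
      + Matrix.diagonal (fun v => (∑ w, |y w|) / N * |y v|)) := by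
  set c := ∑ w, |y w| with hc
  have hc0 : 0 ≤ c := Finset.sum_nonneg fun _ _ => abs_nonneg _
  have hN' : (0 : ℝ) < N := by exact_mod_cast hN
  rcases hc0.eq_or_lt with h0 | hcpos
  · have hy : y = 0 := by
      ext v
      have := (Finset.sum_eq_zero_iff_of_nonneg (fun w _ => abs_nonneg (y w))).1
        (hc.symm.trans h0.symm) v (by simp)
      simpa using this
    subst hy
    simpa using IsLocalPSDSum.zero (V := V) (N + 1)
  · have h := isLocalPSDSum_sampling (fun v => |y v| / c)
      (fun v => c * (SignType.sign (y v) : ℝ)) y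
      (fun v => by positivity) (by rw [← Finset.sum_div, ← hc, div_self hcpos.ne'])
      (fun v => by field_simp; exact (abs_mul_sign _).symm) (N + 1) ∅ 0 (by simp)
    have h' := (h.smul (c := 1 / ((N + 1) * N)) (by positivity)).mono
      (R' := N + 1) (by simp)
    convert h' using 1
    ext i j
    simp only [Matrix.add_apply, Matrix.smul_apply, Matrix.sub_apply, vecMulVec_apply,
      Pi.add_apply, Pi.smul_apply, smul_eq_mul, Matrix.diagonal_apply, Pi.zero_apply]
    have hs : |y i| / c * (c * (SignType.sign (y i) : ℝ)) ^ 2 = c * |y i| := by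
      rcases lt_trichotomy (y i) 0 with hy | hy | hy
      · rw [sign_neg hy]; simp; field_simp
      · simp [hy]
      · rw [sign_pos hy]; simp; field_simp
    rw [hs]
    push_cast
    by_cases hij : i = j
    · simp only [hij, if_true]; field_simp; ring
    · simp only [hij, if_false]; field_simp; ring

/-- For a matrix `P` that is reversible with respect to `p`, one has
`diag p * P ^ 2 = ∑ u, p u • (row u)(row u)ᵀ`, so sampling every row with `N + 1` points makes
`diag p * P ^ 2` an `(N + 1)`-local sum at the cost of the diagonal term `c ^ 2 / N`, where `c`
bounds the absolute row sums. -/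
lemma isLocalPSDSum_square {p : V → ℝ} (hp : ∀ v, 0 ≤ p v) {P : Matrix V V ℝ}
    (hP : ∀ u v, p u * P u v = p v * P v u) {c : ℝ} (hc : ∀ u, ∑ v, |P u v| ≤ c)
    {N : ℕ} (hN : 1 ≤ N) :
    IsLocalPSDSum (N + 1)
      (Matrix.diagonal p * (P * P) + (c ^ 2 / N) • Matrix.diagonal p) := by
  have hN' : (0 : ℝ) < N := by exact_mod_cast hN
  have h : Matrix.diagonal p * (P * P) + (c ^ 2 / N) • Matrix.diagonal p
      = ∑ u, p u • (vecMulVec (P u) (P u)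
          + Matrix.diagonal (fun v => (∑ w, |P u w|) / N * |P u v|))
        + Matrix.diagonal (fun v => c ^ 2 / N * p v
            - ∑ u, p u * ((∑ w, |P u w|) / N * |P u v|)) := by
    ext i j
    have key : p i * (P * P) i j = ∑ u, p u * (P u i * P u j) := by
      rw [Matrix.mul_apply, Finset.mul_sum]
      refine Finset.sum_congr rfl fun u _ => ?_
      rw [← mul_assoc, hP i u, mul_assoc]
    simp only [Matrix.add_apply, Matrix.sum_apply, Matrix.smul_apply, vecMulVec_apply, smul_eq_mul,
      Matrix.diagonal_mul, key, mul_add, Finset.sum_add_distrib]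
    by_cases hij : i = j
    · subst hij
      simp
    · simp [hij]
  rw [h]
  refine (IsLocalPSDSum.sum _ fun u _ => (isLocalPSDSum_rankOne (P u) hN).smul (hp u)).add
    (IsLocalPSDSum.diagonal (by omega) fun v => sub_nonneg.2 ?_)
  have hc0 : 0 ≤ c := (Finset.sum_nonneg fun _ _ => abs_nonneg _).trans (hc v)
  calc ∑ u, p u * ((∑ w, |P u w|) / N * |P u v|)
      ≤ ∑ u, c / N * (p v * |P v u|) := by
        refine Finset.sum_le_sum fun u _ => ?_
        have e : p u * |P u v| = p v * |P v u| := by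
          rw [← abs_of_nonneg (hp u), ← abs_mul, hP u v, abs_mul, abs_of_nonneg (hp v)]
        calc p u * ((∑ w, |P u w|) / N * |P u v|)
            = (∑ w, |P u w|) / N * (p v * |P v u|) := by rw [← e]; ring
          _ ≤ c / N * (p v * |P v u|) := by
            have := hc u
            have := hp v
            gcongr
    _ = c / N * p v * ∑ u, |P v u| := by rw [Finset.mul_sum]; simp only [mul_assoc]
    _ ≤ c / N * p v * c := by
        have := hc v
        have := hp v
        gcongr
    _ = c ^ 2 / N * p v := by ring

end Sampling

/-! ### Reversible matrices and absolute row sums -/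

section Reversible

variable {V : Type*} [Fintype V] [DecidableEq V]

/-- Detailed balance of the (possibly signed) kernel `P` with respect to the weights `p`. -/
def Reversible (p : V → ℝ) (P : Matrix V V ℝ) : Prop :=
  ∀ u v, p u * P u v = p v * P v u

lemma Reversible.one (p : V → ℝ) : Reversible p 1 := by
  intro u v
  by_cases h : u = v
  · subst h; rfl
  · simp [h, Ne.symm h]

lemma Reversible.add {p : V → ℝ} {P Q : Matrix V V ℝ} (hP : Reversible p P)
    (hQ : Reversible p Q) : Reversible p (P + Q) := fun u v => by
  simp only [Matrix.add_apply, mul_add, hP u v, hQ u v]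

lemma Reversible.sub {p : V → ℝ} {P Q : Matrix V V ℝ} (hP : Reversible p P)
    (hQ : Reversible p Q) : Reversible p (P - Q) := fun u v => by
  simp only [Matrix.sub_apply, mul_sub, hP u v, hQ u v]

lemma Reversible.smul {p : V → ℝ} {P : Matrix V V ℝ} (c : ℝ) (hP : Reversible p P) :
    Reversible p (c • P) := fun u v => by
  simp only [Matrix.smul_apply, smul_eq_mul, mul_left_comm _ c, hP u v]

lemma Reversible.pow {p : V → ℝ} {P : Matrix V V ℝ} (hP : Reversible p P) (t : ℕ) :
    Reversible p (P ^ t) := by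
  induction t with
  | zero => simpa using Reversible.one p
  | succ t ih =>
    intro u v
    rw [pow_succ, Matrix.mul_apply, ← pow_succ, pow_succ', Matrix.mul_apply, Finset.mul_sum,
      Finset.mul_sum]
    refine Finset.sum_congr rfl fun w _ => ?_
    rw [← mul_assoc, ih u w, mul_right_comm, hP w v]
    ring

/-- All rows of `P` have `ℓ¹` norm at most `c`. -/
def RowBound (c : ℝ) (P : Matrix V V ℝ) : Prop := ∀ u, ∑ v, |P u v| ≤ c

lemma RowBound.add {c d : ℝ} {P Q : Matrix V V ℝ} (hP : RowBound c P) (hQ : RowBound d Q) :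
    RowBound (c + d) (P + Q) := fun u => by
  refine le_trans ?_ (add_le_add (hP u) (hQ u))
  rw [← Finset.sum_add_distrib]
  exact Finset.sum_le_sum fun v _ => abs_add_le _ _

lemma RowBound.smul {c : ℝ} {P : Matrix V V ℝ} (a : ℝ) (hP : RowBound c P) :
    RowBound (|a| * c) (a • P) := fun u => by
  simp only [Matrix.smul_apply, smul_eq_mul, abs_mul, ← Finset.mul_sum]
  exact mul_le_mul_of_nonneg_left (hP u) (abs_nonneg a)

lemma RowBound.sub {c d : ℝ} {P Q : Matrix V V ℝ} (hP : RowBound c P) (hQ : RowBound d Q) :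
    RowBound (c + d) (P - Q) := by
  have := hP.add (hQ.smul (-1))
  simpa [sub_eq_add_neg] using this

lemma rowBound_of_rowStochastic {P : Matrix V V ℝ} (hP : P ∈ rowStochastic ℝ V) :
    RowBound 1 P := fun u => by
  rw [← sum_row_of_mem_rowStochastic hP u]
  exact Finset.sum_le_sum fun v _ => (abs_of_nonneg (nonneg_of_mem_rowStochastic hP)).le

/-- The `ℓ¹` norm of row `u` is the `u`-th coordinate of the image of a sign vector. -/
lemma rowBound_l2opNorm (Q : Matrix V V ℝ) :
    RowBound (l2opNorm Q * √(Fintype.card V)) Q := by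
  intro u
  let x : EuclideanSpace ℝ V := WithLp.toLp 2 fun v => (SignType.sign (Q u v) : ℝ)
  have hx : ‖x‖ ≤ √(Fintype.card V) := by
    rw [EuclideanSpace.norm_eq]
    refine Real.sqrt_le_sqrt ?_
    calc ∑ v, ‖x v‖ ^ 2 ≤ ∑ _v : V, (1 : ℝ) := by
          refine Finset.sum_le_sum fun v _ => ?_
          rcases lt_trichotomy (Q u v) 0 with h | h | h <;> simp [x, h]
      _ = Fintype.card V := by simp
  have h1 : (toEuclideanCLM (𝕜 := ℝ) Q x) u = ∑ v, |Q u v| := by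
    rw [toEuclideanCLM_toLp]
    simp [Matrix.mulVec, dotProduct, self_mul_sign]
  rw [← h1]
  calc (toEuclideanCLM (𝕜 := ℝ) Q x) u ≤ ‖(toEuclideanCLM (𝕜 := ℝ) Q x) u‖ := le_abs_self _
    _ ≤ ‖toEuclideanCLM (𝕜 := ℝ) Q x‖ := PiLp.norm_apply_le _ u
    _ ≤ l2opNorm Q * ‖x‖ := ContinuousLinearMap.le_opNorm _ _
    _ ≤ l2opNorm Q * √(Fintype.card V) :=
        mul_le_mul_of_nonneg_left hx (norm_nonneg _)

end Reversible

/-! ### The random walk -/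

section Walk

variable {V : Type*} [Fintype V] [DecidableEq V] [Nonempty V]
variable {A : Matrix V V ℝ}

/-- The rank-one kernel `𝟙 πᵀ` that jumps to the stationary distribution in one step. -/
noncomputable def gJ (A : Matrix V V ℝ) : Matrix V V ℝ := Matrix.of fun _ v => gpi A v

lemma gm_pos (hrow : ∀ u, 0 < ∑ v, A u v) : 0 < gm A :=
  Finset.sum_pos (fun u _ => hrow u) Finset.univ_nonempty

lemma gpi_pos (hrow : ∀ u, 0 < ∑ v, A u v) (u : V) : 0 < gpi A u :=
  div_pos (hrow u) (gm_pos hrow)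

lemma sum_gpi (hrow : ∀ u, 0 < ∑ v, A u v) : ∑ u, gpi A u = 1 := by
  simp only [gpi, ← Finset.sum_div]
  exact div_self (gm_pos hrow).ne'

lemma gpi_mul_gK (hrow : ∀ u, 0 < ∑ v, A u v) (u v : V) :
    gpi A u * gK A u v = (gm A)⁻¹ * A u v := by
  have : gdeg A u ≠ 0 := (hrow u).ne'
  simp only [gpi, gK, Matrix.of_apply]
  field_simp

lemma reversible_gK (hA : A.IsSymm) (hrow : ∀ u, 0 < ∑ v, A u v) :
    Reversible (gpi A) (gK A) := fun u v => by
  rw [gpi_mul_gK hrow, gpi_mul_gK hrow, hA.apply]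

lemma reversible_gJ : Reversible (gpi A) (gJ A) := fun u v => by
  simp [gJ, mul_comm]

lemma gK_mem (hA0 : ∀ u v, 0 ≤ A u v) (hrow : ∀ u, 0 < ∑ v, A u v) :
    gK A ∈ rowStochastic ℝ V := by
  rw [mem_rowStochastic_iff_sum]
  refine ⟨fun u v => div_nonneg (hA0 u v) (hrow u).le, fun u => ?_⟩
  simp only [gK, Matrix.of_apply, ← Finset.sum_div]
  exact div_self (hrow u).ne'

lemma gJ_mem (hrow : ∀ u, 0 < ∑ v, A u v) : gJ A ∈ rowStochastic ℝ V := by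
  rw [mem_rowStochastic_iff_sum]
  exact ⟨fun u v => (gpi_pos hrow v).le, fun u => sum_gpi hrow⟩

lemma rowStochastic_mul_gJ {P : Matrix V V ℝ} (hP : P ∈ rowStochastic ℝ V) :
    P * gJ A = gJ A := by
  ext u v
  simp [Matrix.mul_apply, gJ, ← Finset.sum_mul, sum_row_of_mem_rowStochastic hP]

lemma gJ_mul_gK (hA : A.IsSymm) (hA0 : ∀ u v, 0 ≤ A u v) (hrow : ∀ u, 0 < ∑ v, A u v) :
    gJ A * gK A = gJ A := by
  ext u v
  simp only [Matrix.mul_apply, gJ, Matrix.of_apply]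
  rw [Finset.sum_congr rfl fun w _ => reversible_gK hA hrow w v, ← Finset.mul_sum,
    sum_row_of_mem_rowStochastic (gK_mem hA0 hrow), mul_one]

lemma gK_sub_gJ_pow (hA : A.IsSymm) (hA0 : ∀ u v, 0 ≤ A u v) (hrow : ∀ u, 0 < ∑ v, A u v)
    (t : ℕ) : (gK A - gJ A) ^ (t + 1) = gK A ^ (t + 1) - gJ A := by
  induction t with
  | zero => simp
  | succ t ih =>
    rw [pow_succ, ih, sub_mul, mul_sub, mul_sub, ← pow_succ,
      rowStochastic_mul_gJ (pow_mem (gK_mem hA0 hrow) _), gJ_mul_gK hA hA0 hrow,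
      rowStochastic_mul_gJ (gJ_mem hrow)]
    abel

lemma rowBound_gK_sub_gJ_pow (hA : A.IsSymm) (hA0 : ∀ u v, 0 ≤ A u v)
    (hrow : ∀ u, 0 < ∑ v, A u v) (t : ℕ) : RowBound 2 ((gK A - gJ A) ^ t) := by
  cases t with
  | zero =>
    intro u
    have := rowBound_of_rowStochastic (one_mem (rowStochastic ℝ V)) u
    rw [pow_zero]
    linarith
  | succ t =>
    rw [gK_sub_gJ_pow hA hA0 hrow, ← one_add_one_eq_two]
    exact (rowBound_of_rowStochastic (pow_mem (gK_mem hA0 hrow) _)).sub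
      (rowBound_of_rowStochastic (gJ_mem hrow))

lemma gpiStar_pos (hrow : ∀ u, 0 < ∑ v, A u v) : 0 < gpiStar A := by
  rw [gpiStar, Finset.lt_inf'_iff]
  exact fun u _ => gpi_pos hrow u

lemma card_mul_gpiStar_le (hrow : ∀ u, 0 < ∑ v, A u v) :
    Fintype.card V * gpiStar A ≤ 1 := by
  rw [← sum_gpi hrow]
  calc (Fintype.card V : ℝ) * gpiStar A = ∑ _u : V, gpiStar A := by simp
    _ ≤ _ := Finset.sum_le_sum fun u _ => Finset.inf'_le _ (Finset.mem_univ u)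

end Walk

/-! ### Numerical estimates -/

/-- The choice of the walk length `l` makes `(ρ / ε) ^ (4 * l) ≤ ε ^ 2 * p ≤ ε ^ 2 / n`. -/
lemma walk_length_bound {ρ ε p n : ℝ} (hρ : 0 < ρ) (hρε : ρ < ε) (hp : 0 < p) (hn : 0 ≤ n)
    (hnp : n * p ≤ 1) {l : ℕ}
    (hl : Real.log (1 / (ε ^ 2 * p)) / (4 * Real.log (ε / ρ)) ≤ l) :
    ρ ^ (2 * l) * √n ≤ ε * ε ^ (2 * l) := by
  have hε : 0 < ε := hρ.trans hρε
  have hlog : 0 < Real.log (ε / ρ) := Real.log_pos (by rwa [one_lt_div hρ])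
  rw [div_le_iff₀ (by positivity)] at hl
  have h1 : 1 / (ε ^ 2 * p) ≤ (ε / ρ) ^ (4 * l) := by
    rw [← Real.log_le_log_iff (by positivity) (by positivity), Real.log_pow]
    push_cast
    linarith
  have h2 : ρ ^ (4 * l) ≤ ε ^ 2 * p * ε ^ (4 * l) := by
    rw [div_pow, div_le_div_iff₀ (by positivity) (by positivity)] at h1
    linarith
  refine le_of_sq_le_sq ?_ (by positivity)
  calc (ρ ^ (2 * l) * √n) ^ 2 = ρ ^ (4 * l) * n := by
        rw [mul_pow, Real.sq_sqrt hn, ← pow_mul]; ring_nf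
    _ ≤ ε ^ 2 * p * ε ^ (4 * l) * n := by gcongr
    _ = (n * p) * (ε ^ 2 * ε ^ (4 * l)) := by ring
    _ ≤ 1 * (ε ^ 2 * ε ^ (4 * l)) := by gcongr
    _ = (ε * ε ^ (2 * l)) ^ 2 := by rw [mul_pow, ← pow_mul]; ring_nf

lemma nat_mul_pow_le_one {r : ℝ} (h0 : 0 ≤ r) (h1 : r ≤ 1 / 3) (i : ℕ) :
    ((i : ℝ) + 1) * r ^ i ≤ 1 := by
  have h : i + 1 ≤ 3 ^ i := Nat.lt_pow_self (by norm_num)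
  have h' : ((i : ℝ) + 1) ≤ 3 ^ i := by exact_mod_cast h
  calc ((i : ℝ) + 1) * r ^ i ≤ 3 ^ i * (1 / 3) ^ i := by gcongr
    _ = 1 := by rw [← mul_pow]; norm_num

lemma sum_squares_identity_comm {R : Type*} [CommRing R] (x : R) (n : ℕ) :
    ∑ j ∈ Finset.range n, ((n : R) - j) * ((x ^ j - x ^ (j + 2)) * (x ^ j - x ^ (j + 2)))
      = n - (n + 1) * x ^ 2 + x ^ (2 * (n + 1)) := by
  induction n with
  | zero => simp
  | succ n ih =>
    rw [Finset.sum_range_succ']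
    have : ∀ j ∈ Finset.range n, (((n + 1 : ℕ) : R) - ((j + 1 : ℕ) : R))
          * ((x ^ (j + 1) - x ^ (j + 1 + 2)) * (x ^ (j + 1) - x ^ (j + 1 + 2)))
        = x ^ 2 * (((n : R) - j) * ((x ^ j - x ^ (j + 2)) * (x ^ j - x ^ (j + 2)))) := by
      intro j _
      push_cast
      ring
    rw [Finset.sum_congr rfl this, ← Finset.mul_sum, ih]
    push_cast
    ring

/-- An explicit sum-of-squares proof of the arithmetic-geometric mean inequality
`(n + 1) x² ≤ n + x ^ (2 (n + 1))`. -/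
lemma sum_squares_identity {B : Type*} [Ring B] [Algebra ℝ B] (x : B) (n : ℕ) :
    ∑ j ∈ Finset.range n, ((n : ℝ) - j) • ((x ^ j - x ^ (j + 2)) * (x ^ j - x ^ (j + 2)))
      = (n : ℝ) • 1 - ((n : ℝ) + 1) • x ^ 2 + x ^ (2 * (n + 1)) := by
  have h := congrArg (Polynomial.aeval (R := ℝ) x)
    (sum_squares_identity_comm (Polynomial.X : Polynomial ℝ) n)
  simp only [map_sum, map_mul, map_sub, map_add, map_pow, Polynomial.aeval_X, map_natCast,
    map_one] at h
  simp only [Algebra.smul_def, map_sub, map_add, map_natCast, map_one, mul_one]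
  exact h

/-- Total of the diagonal costs, with `N = 2 k l + 1` and `l = n + 1`.  Writing `x = 1 / l`, the
bound reduces to the positivity of a quadratic in `x`. -/
lemma total_cost_bound {ε : ℝ} (hε0 : 0 < ε) (hε2 : ε ^ 2 ≤ 1 / 3) {n k : ℕ}
    (hk : (1 / ε) ^ (2 * (n + 1)) ≤ k) {N : ℝ} (hN : N = 2 * (k * (n + 1)) + 1) :
    ε ^ 2 / (2 * (n + 1)) ≤ 5 * ε / 2 - ε / 2 - ε * n / (2 * (n + 1))
      - ε / 2 * ((1 + 2 / ε) ^ 2 / N)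
      - ∑ j ∈ Finset.range n, (ε / (2 * (n + 1)) * (n - j))
          * ((2 * (1 / ε) ^ j + 2 * (1 / ε) ^ (j + 2)) ^ 2 / N) := by
  have hε1 : ε ≤ 0.578 := by nlinarith
  have hl0 : (0 : ℝ) < n + 1 := by positivity
  have hpow : 0 < (1 / ε) ^ (2 * (n + 1)) := by positivity
  have hNl : 2 * (n + 1) * (1 / ε) ^ (2 * (n + 1)) ≤ N := by
    rw [hN]; nlinarith
  have hN0 : 0 < N := lt_of_lt_of_le (by positivity) hNl
  have hinv : 1 / N ≤ ε ^ (2 * (n + 1)) / (2 * (n + 1)) := by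
    rw [div_le_div_iff₀ hN0 (by positivity), one_mul]
    calc (2 * ((n : ℝ) + 1))
        = ε ^ (2 * (n + 1)) * (2 * (n + 1) * (1 / ε) ^ (2 * (n + 1))) := by
          rw [one_div, inv_pow]; field_simp
      _ ≤ ε ^ (2 * (n + 1)) * N := by gcongr
  have hterm : ∀ j ∈ Finset.range n, (ε / (2 * (n + 1)) * (n - j))
      * ((2 * (1 / ε) ^ j + 2 * (1 / ε) ^ (j + 2)) ^ 2 / N)
      ≤ ε * (16 / 9) / (n + 1) ^ 2 := by
    intro j hj
    obtain ⟨i, rfl⟩ : ∃ i, n = j + 1 + i := Nat.exists_eq_add_of_le (Finset.mem_range.1 hj)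
    have hi := nat_mul_pow_le_one (sq_nonneg ε) hε2 i
    calc _ = (ε / (2 * (((j + 1 + i : ℕ) : ℝ) + 1)) * (i + 1))
            * ((2 * (1 / ε) ^ j + 2 * (1 / ε) ^ (j + 2)) ^ 2 * (1 / N)) := by
          push_cast; ring
      _ ≤ (ε / (2 * (((j + 1 + i : ℕ) : ℝ) + 1)) * (i + 1))
            * ((2 * (1 / ε) ^ j + 2 * (1 / ε) ^ (j + 2)) ^ 2
              * (ε ^ (2 * ((j + 1 + i) + 1)) / (2 * (((j + 1 + i : ℕ) : ℝ) + 1)))) := by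
          gcongr
      _ = ε / (((j + 1 + i : ℕ) : ℝ) + 1) ^ 2
            * ((1 + ε ^ 2) ^ 2 * ((i + 1) * (ε ^ 2) ^ i)) := by
          have : ε ^ (2 * ((j + 1 + i) + 1)) = ε ^ j * ε ^ j * ε ^ 4 * (ε ^ 2) ^ i := by ring
          rw [this, one_div, inv_pow, inv_pow, pow_add ε j 2]
          field_simp
          ring
      _ ≤ ε / (((j + 1 + i : ℕ) : ℝ) + 1) ^ 2 * ((1 + 1 / 3) ^ 2 * 1) := by gcongr
      _ = _ := by ring
  have hsum := Finset.sum_le_sum hterm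
  rw [Finset.sum_const, Finset.card_range, nsmul_eq_mul] at hsum
  have hfirst : ε / 2 * ((1 + 2 / ε) ^ 2 / N) ≤ ε * ((ε + 2) ^ 2 / (4 * (n + 1))) := by
    have h1 : ε ^ (2 * (n + 1)) ≤ ε ^ 2 :=
      pow_le_pow_of_le_one hε0.le (by linarith) (by omega)
    calc ε / 2 * ((1 + 2 / ε) ^ 2 / N) = ε / 2 * ((1 + 2 / ε) ^ 2 * (1 / N)) := by ring
      _ ≤ ε / 2 * ((1 + 2 / ε) ^ 2 * (ε ^ 2 / (2 * (n + 1)))) := by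
        have h2 : 1 / N ≤ ε ^ 2 / (2 * (n + 1)) := hinv.trans (by gcongr)
        exact mul_le_mul_of_nonneg_left (mul_le_mul_of_nonneg_left h2 (by positivity))
          (by positivity)
      _ = _ := by field_simp; ring
  suffices h : 0 ≤ ε * (2 - n / (2 * (n + 1)) - (ε + 2) ^ 2 / (4 * (n + 1))
      - n * (16 / 9 / (n + 1) ^ 2) - ε / (2 * (n + 1))) by
    have e : ε * (2 - n / (2 * (n + 1)) - (ε + 2) ^ 2 / (4 * (n + 1))
        - n * (16 / 9 / (n + 1) ^ 2) - ε / (2 * (n + 1)))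
        = 5 * ε / 2 - ε / 2 - ε * n / (2 * (n + 1)) - ε * ((ε + 2) ^ 2 / (4 * (n + 1)))
          - n * (ε * (16 / 9) / (n + 1) ^ 2) - ε ^ 2 / (2 * (n + 1)) := by ring
    linarith
  refine mul_nonneg hε0.le ?_
  obtain ⟨x, hx⟩ : ∃ x : ℝ, x = 1 / (n + 1) := ⟨_, rfl⟩
  have hx0 : 0 < x := by rw [hx]; positivity
  have e : 2 - (n : ℝ) / (2 * (n + 1)) - (ε + 2) ^ 2 / (4 * (n + 1))
      - n * (16 / 9 / (n + 1) ^ 2) - ε / (2 * (n + 1))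
      = 2 - (1 - x) / 2 - x * (ε + 2) ^ 2 / 4 - 16 / 9 * (x - x ^ 2) - x * ε / 2 := by
    rw [hx]; field_simp; ring
  rw [e]
  have h1 : x * ((ε + 2) ^ 2 / 4 + ε / 2) ≤ x * 1.9506 := by
    gcongr
    nlinarith
  nlinarith [sq_nonneg (x - 0.908)]

theorem sa_maxcut_refutation {V : Type*} [Fintype V] [DecidableEq V] [Nonempty V]
    (A : Matrix V V ℝ) (hA : A.IsSymm) (hA0 : ∀ u v, 0 ≤ A u v)
    (hrow : ∀ u, 0 < ∑ v, A u v)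
    (ρ ε : ℝ) (hρ : 0 < ρ) (hρε : ρ < ε) (hε : ε ≤ 1 / Real.sqrt 3)
    (l k : ℕ)
    (hl : l = ⌈Real.log (1 / (ε ^ 2 * gpiStar A)) / (4 * Real.log (ε / ρ))⌉₊)
    (hk : k = ⌈(1 / ε) ^ (2 * l)⌉₊)
    (hop : l2opNorm ((gK A - Matrix.of fun _ v => gpi A v) ^ (2 * l)) ≤ ρ ^ (2 * l)) :
    IsLocalPSDSum (2 * (k * l + 1))
      ((5 * ε / 2) • Matrix.diagonal (gpi A) + (gm A)⁻¹ • A) ∧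
    ∀ x : V → ℝ, (∀ u, x u = 1 ∨ x u = -1) →
      -((5 * ε / 2) * gm A) ≤ ∑ u, ∑ v, A u v * x u * x v ∧
      1 / 2 - (1 / (2 * gm A)) * ∑ u, ∑ v, A u v * x u * x v
        ≤ 1 / 2 + (5 / 4) * ε := by
  have hε0 : 0 < ε := hρ.trans hρε
  have hm := gm_pos hrow
  have hpi := gpi_pos hrow
  have hε2 : ε ^ 2 ≤ 1 / 3 := by
    calc ε ^ 2 ≤ (1 / √3) ^ 2 := by gcongr
      _ = 1 / 3 := by rw [div_pow, Real.sq_sqrt (by norm_num)]; norm_num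
  have hlog : 0 < Real.log (ε / ρ) := Real.log_pos (by rwa [one_lt_div hρ])
  have hps := gpiStar_pos hrow
  have hcard := card_mul_gpiStar_le hrow
  have hlpos : 1 ≤ l := by
    rw [hl, Nat.one_le_ceil_iff]
    refine div_pos (Real.log_pos ?_) (by positivity)
    have h1 : (1 : ℝ) ≤ Fintype.card V := by exact_mod_cast Fintype.card_pos (α := V)
    rw [one_lt_div (by positivity)]
    nlinarith
  have hlen := walk_length_bound hρ hρε hps (Nat.cast_nonneg (Fintype.card V)) hcard
    (l := l) (by rw [hl]; exact Nat.le_ceil _)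
  have hkle : (1 / ε) ^ (2 * l) ≤ (k : ℝ) := by rw [hk]; exact Nat.le_ceil _
  clear hl hk
  obtain ⟨n, rfl⟩ : ∃ n, l = n + 1 := ⟨l - 1, by omega⟩
  change l2opNorm ((gK A - gJ A) ^ (2 * (n + 1))) ≤ _ at hop
  have hmain : IsLocalPSDSum (2 * (k * (n + 1) + 1))
      ((5 * ε / 2) • Matrix.diagonal (gpi A) + (gm A)⁻¹ • A) := by
    set N : ℕ := 2 * (k * (n + 1)) + 1 with hN
    have hN1 : 1 ≤ N := by omega
    have hNcast : (N : ℝ) = 2 * (k * (n + 1)) + 1 := by rw [hN]; push_cast; ring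
    rw [show 2 * (k * (n + 1) + 1) = N + 1 by omega]
    set K := gK A
    set J := gJ A
    set s : Matrix V V ℝ := (1 / ε) • (K - J) with hs
    have hKJ : K * J = J := rowStochastic_mul_gJ (gK_mem hA0 hrow)
    have hJK : J * K = J := gJ_mul_gK hA hA0 hrow
    have hJJ : J * J = J := rowStochastic_mul_gJ (gJ_mem hrow)
    have hrK : Reversible (gpi A) K := reversible_gK hA hrow
    have hrJ : Reversible (gpi A) J := reversible_gJ
    have hrs : Reversible (gpi A) s := (hrK.sub hrJ).smul _
    have hbs : ∀ t, RowBound (2 * (1 / ε) ^ t) (s ^ t) := by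
      intro t
      have := (rowBound_gK_sub_gJ_pow hA hA0 hrow t).smul ((1 / ε) ^ t)
      rwa [abs_of_pos (by positivity), ← smul_pow, mul_comm] at this
    -- `γ` is the smaller root of `γ² - 2 (1 + 1/ε) γ + 1/ε² = 0`; it turns the term `K² / ε²`
    -- of `(1 + K / ε)²` into `(K² - J) / ε² = s²`.
    obtain ⟨γ, hγ0, hγ1, hγ⟩ : ∃ γ : ℝ, 0 ≤ γ ∧ γ ≤ 1 / ε ∧
        2 * γ * (1 + 1 / ε) - γ ^ 2 = (1 / ε) ^ 2 := by
      have h0 : 0 < 1 / ε := by positivity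
      have hsq : √(1 + 2 * (1 / ε)) ^ 2 = 1 + 2 * (1 / ε) := Real.sq_sqrt (by positivity)
      refine ⟨1 + 1 / ε - √(1 + 2 * (1 / ε)), ?_, ?_, ?_⟩
      · rw [sub_nonneg, Real.sqrt_le_left (by positivity)]
        nlinarith
      · have : 1 ≤ √(1 + 2 * (1 / ε)) := by
          rw [Real.one_le_sqrt]; linarith
        linarith
      · linear_combination -hsq
    set P₀ : Matrix V V ℝ := 1 + (1 / ε) • K - γ • J with hP₀
    have hP₀sq : P₀ * P₀ = 1 + (2 / ε) • K + s ^ 2 := by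
      have e1 : P₀ * P₀ = 1 + (2 / ε) • K + (1 / ε) ^ 2 • (K * K)
          - (2 * γ * (1 + 1 / ε) - γ ^ 2) • J := by
        simp only [hP₀, sub_mul, mul_sub, add_mul, mul_add, one_mul, mul_one, smul_mul_assoc,
          mul_smul_comm, hKJ, hJK, hJJ]
        module
      have e2 : s ^ 2 = (1 / ε) ^ 2 • (K * K) - (1 / ε) ^ 2 • J := by
        simp only [pow_two, hs, sub_mul, mul_sub, smul_mul_assoc, mul_smul_comm, hKJ, hJK, hJJ]
        module
      rw [e1, e2, hγ]
      abel
    have hbP₀ : RowBound (1 + 2 / ε) P₀ := by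
      have h1 := ((rowBound_of_rowStochastic (one_mem (rowStochastic ℝ V))).add
        ((rowBound_of_rowStochastic (gK_mem hA0 hrow)).smul (1 / ε))).sub
        ((rowBound_of_rowStochastic (gJ_mem hrow)).smul γ)
      intro u
      refine (h1 u).trans ?_
      rw [abs_of_nonneg hγ0, abs_of_pos (by positivity : 0 < 1 / ε)]
      have : 2 / ε = 1 / ε + 1 / ε := by ring
      linarith
    have hrP₀ : Reversible (gpi A) P₀ :=
      ((Reversible.one _).add (hrK.smul _)).sub (hrJ.smul _)
    have hL₀ := isLocalPSDSum_square (fun v => (hpi v).le) hrP₀ hbP₀ hN1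
    have hL : ∀ j, IsLocalPSDSum (N + 1) (Matrix.diagonal (gpi A)
          * ((s ^ j - s ^ (j + 2)) * (s ^ j - s ^ (j + 2)))
        + ((2 * (1 / ε) ^ j + 2 * (1 / ε) ^ (j + 2)) ^ 2 / N) • Matrix.diagonal (gpi A)) :=
      fun j => isLocalPSDSum_square (fun v => (hpi v).le) ((hrs.pow j).sub (hrs.pow (j + 2)))
        ((hbs j).sub (hbs (j + 2))) hN1
    -- The remainder is controlled by the row sums of the high power of `K - J`.
    set Q : Matrix V V ℝ := (ε / (2 * (n + 1))) • s ^ (2 * (n + 1)) with hQ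
    have hrQ : Reversible (gpi A) Q := (hrs.pow _).smul _
    have hbQ : RowBound (ε ^ 2 / (2 * (n + 1))) Q := by
      have h1 := ((rowBound_l2opNorm ((K - J) ^ (2 * (n + 1)))).smul
        ((1 / ε) ^ (2 * (n + 1)))).smul (ε / (2 * (n + 1)))
      rw [← smul_pow, ← hs, ← hQ, abs_of_pos (by positivity), abs_of_pos (by positivity)] at h1
      intro u
      refine (h1 u).trans ?_
      calc ε / (2 * (n + 1)) * ((1 / ε) ^ (2 * (n + 1))
            * (l2opNorm ((K - J) ^ (2 * (n + 1))) * √(Fintype.card V)))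
          ≤ ε / (2 * (n + 1)) * ((1 / ε) ^ (2 * (n + 1))
            * (ρ ^ (2 * (n + 1)) * √(Fintype.card V))) := by gcongr
        _ ≤ ε / (2 * (n + 1)) * ((1 / ε) ^ (2 * (n + 1)) * (ε * ε ^ (2 * (n + 1)))) := by
          gcongr
        _ = ε ^ 2 / (2 * (n + 1)) := by rw [one_div, inv_pow]; field_simp
    have hcost := total_cost_bound hε0 hε2 hkle hNcast
    set w := 5 * ε / 2 - ε / 2 - ε * n / (2 * (n + 1))
      - ε / 2 * ((1 + 2 / ε) ^ 2 / N)
      - ∑ j ∈ Finset.range n, (ε / (2 * (n + 1)) * (n - j))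
          * ((2 * (1 / ε) ^ j + 2 * (1 / ε) ^ (j + 2)) ^ 2 / N) with hw
    have hrem : IsLocalPSDSum (N + 1)
        (Matrix.diagonal (fun u => w * gpi A u) - Matrix.diagonal (gpi A) * Q) := by
      refine IsLocalPSDSum.diagonal_sub (by omega) (fun u v => ?_) fun u => ?_
      · simpa [Matrix.diagonal_mul] using hrQ u v
      · simp only [Matrix.diagonal_mul, abs_mul, abs_of_pos (hpi u), ← Finset.mul_sum]
        rw [mul_comm]
        exact mul_le_mul_of_nonneg_right ((hbQ u).trans hcost) (hpi u).le
    have hsumL : IsLocalPSDSum (N + 1) (∑ j ∈ Finset.range n, (ε / (2 * (n + 1)) * (n - j)) •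
        (Matrix.diagonal (gpi A) * ((s ^ j - s ^ (j + 2)) * (s ^ j - s ^ (j + 2)))
        + ((2 * (1 / ε) ^ j + 2 * (1 / ε) ^ (j + 2)) ^ 2 / N) • Matrix.diagonal (gpi A))) := by
      refine IsLocalPSDSum.sum _ fun j hj => (hL j).smul ?_
      have : (j : ℝ) ≤ n := by exact_mod_cast (Finset.mem_range.1 hj).le
      have := sub_nonneg.2 this
      positivity
    have hPK : (gm A)⁻¹ • A = Matrix.diagonal (gpi A) * K := by
      ext u v
      simp [Matrix.diagonal_mul, gpi_mul_gK hrow, K]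
    convert ((hL₀.smul (c := ε / 2) (by positivity)).add hsumL).add hrem using 1
    have hdw : Matrix.diagonal (fun u => w * gpi A u) = w • Matrix.diagonal (gpi A) := by
      ext u v
      by_cases huv : u = v
      · subst huv; simp
      · simp [huv]
    have hid := sum_squares_identity s n
    have hS : ∑ j ∈ Finset.range n, (ε / (2 * (n + 1)) * ((n : ℝ) - j)) •
        (Matrix.diagonal (gpi A) * ((s ^ j - s ^ (j + 2)) * (s ^ j - s ^ (j + 2)))
        + ((2 * (1 / ε) ^ j + 2 * (1 / ε) ^ (j + 2)) ^ 2 / (N : ℝ)) • Matrix.diagonal (gpi A))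
        = (ε / (2 * (n + 1))) • (Matrix.diagonal (gpi A) *
            ((n : ℝ) • 1 - ((n : ℝ) + 1) • s ^ 2 + s ^ (2 * (n + 1))))
          + (∑ j ∈ Finset.range n, (ε / (2 * (n + 1)) * ((n : ℝ) - j))
          * ((2 * (1 / ε) ^ j + 2 * (1 / ε) ^ (j + 2)) ^ 2 / N)) • Matrix.diagonal (gpi A) := by
      rw [← hid, Finset.mul_sum, Finset.smul_sum, Finset.sum_smul, ← Finset.sum_add_distrib]
      refine Finset.sum_congr rfl fun j _ => ?_
      rw [smul_add, mul_smul_comm, smul_smul, smul_smul]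
    rw [hS, hdw, hP₀sq, hPK, hQ]
    set T := ∑ j ∈ Finset.range n, (ε / (2 * (n + 1)) * ((n : ℝ) - j))
          * ((2 * (1 / ε) ^ j + 2 * (1 / ε) ^ (j + 2)) ^ 2 / N) with hT
    simp only [mul_add, mul_sub, mul_smul_comm, mul_one]
    have hn1 : (n : ℝ) + 1 ≠ 0 := by positivity
    have hNne : (N : ℝ) ≠ 0 := by positivity
    rw [hw]
    match_scalars
    · field_simp
      ring
    · field_simp
    · field_simp
      ring
    · field_simp
      ring
  refine ⟨hmain, fun x hx => ?_⟩
  have hquad := hmain.posSemidef.dotProduct_mulVec_nonneg x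
  have hx2 : ∀ u, x u * x u = 1 := fun u => by rcases hx u with h | h <;> simp [h]
  have e : star x ⬝ᵥ (((5 * ε / 2) • Matrix.diagonal (gpi A) + (gm A)⁻¹ • A) *ᵥ x)
      = 5 * ε / 2 + (gm A)⁻¹ * ∑ u, ∑ v, A u v * x u * x v := by
    rw [Matrix.add_mulVec, Matrix.smul_mulVec, Matrix.smul_mulVec, dotProduct_add,
      dotProduct_smul, dotProduct_smul]
    congr 1
    · have : star x ⬝ᵥ (Matrix.diagonal (gpi A) *ᵥ x) = ∑ u, gpi A u := by
        simp only [dotProduct, Matrix.mulVec_diagonal, star_trivial]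
        refine Finset.sum_congr rfl fun u _ => ?_
        linear_combination gpi A u * hx2 u
      rw [this, sum_gpi hrow, smul_eq_mul, mul_one]
    · simp only [dotProduct, Matrix.mulVec, star_trivial, smul_eq_mul, Finset.mul_sum]
      refine Finset.sum_congr rfl fun u _ => Finset.sum_congr rfl fun v _ => ?_
      ring
  rw [e] at hquad
  generalize ∑ u, ∑ v, A u v * x u * x v = X at hquad
  constructor
  · have := mul_nonneg hquad hm.le
    have e2 : (5 * ε / 2 + (gm A)⁻¹ * X) * gm A = 5 * ε / 2 * gm A + X := by field_simp
    linarith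
  · have e3 : 1 / (2 * gm A) * X = (gm A)⁻¹ * X / 2 := by field_simp
    rw [e3]
    linarith
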